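/- arXiv:1604.02969 — 2 statements merged into one kernel-verified Lean document; each statement's English description precedes it below -/
import Mathlib

section
/- Let H be a commutative connected graded k-Hopf algebra with Bernstein homomorphism β_H : H → H ⊗ QSym, β_H(h) = Σ_α ξ_α(h) ⊗ M_α where ξ_α = m^{(k−1)} ∘ π_α ∘ Δ^{(k−1)} for α = (a₁,…,a_k). Then the antipode of H satisfies S_H = (id_H ⊗ (ε_P ∘ S_QSym)) ∘ β_H, where S_QSym is the antipode of QSym and ε_P : QSym → k is f ↦ f(1,0,0,…). -/
open TensorProduct

/-- A composition: a finite list of positive integers. -/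
def IsComposition (α : List ℕ) : Prop := ∀ a ∈ α, 0 < a

section

variable {k H : Type*} [CommRing k] [Ring H] [HopfAlgebra k H]

/-- For a `k`-algebra homomorphism `ζ : H → k` and graded projections `π n : H → H`, and a
composition `α = (a₁, …, a_m)`, the map `ζ_α : H → k` : the composite of the iterated
comultiplication `Δ^{(m-1)} : H → H^{⊗m}`, the projection `π_α = π_{a₁} ⊗ ⋯ ⊗ π_{a_m}`,
`ζ^{⊗m}`, and the canonical isomorphism `k^{⊗m} ≅ k` (written in its standard recursive
form). -/
noncomputable def zetaA (ζ : H →ₐ[k] k) (π : ℕ → H →ₗ[k] H) : List ℕ → (H →ₗ[k] k)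
  | [] => Coalgebra.counit (R := k)
  | a :: t => LinearMap.mul' k k ∘ₗ
      TensorProduct.map (ζ.toLinearMap ∘ₗ π a) (zetaA ζ π t) ∘ₗ Coalgebra.comul (R := k)

/-- Convolution product on `Hom_k(H, k)`: `f ⋆ g = m_k ∘ (f ⊗ g) ∘ Δ_H`. -/
noncomputable def convK (f g : H →ₗ[k] k) : H →ₗ[k] k :=
  LinearMap.mul' k k ∘ₗ TensorProduct.map f g ∘ₗ Coalgebra.comul (R := k)

/-- For graded projections `π n : H → H` and a composition `α = (a₁, …, a_m)`, the map
`ξ_α = m^{(m-1)} ∘ π_α ∘ Δ^{(m-1)} : H → H` (written in its standard recursive form). -/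
noncomputable def xiA (π : ℕ → H →ₗ[k] H) : List ℕ → (H →ₗ[k] H)
  | [] => Algebra.linearMap k H ∘ₗ Coalgebra.counit (R := k)
  | a :: t => LinearMap.mul' k H ∘ₗ
      TensorProduct.map (π a) (xiA π t) ∘ₗ Coalgebra.comul (R := k)

/-- Convolution product on `End_k(H)`: `f ⋆ g = m_H ∘ (f ⊗ g) ∘ Δ_H`. -/
noncomputable def convH (f g : H →ₗ[k] H) : H →ₗ[k] H :=
  LinearMap.mul' k H ∘ₗ TensorProduct.map f g ∘ₗ Coalgebra.comul (R := k)

end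

open TensorProduct

/-- The underlying `k`-module of the quasisymmetric functions: the free `k`-module with basis
indexed by finite lists of natural numbers (the monomial quasisymmetric functions `M_α` for
compositions `α`, i.e. lists with positive entries, form the monomial basis). -/
abbrev QSymM (k : Type*) [CommRing k] : Type _ := List ℕ →₀ k


/-- The monomial quasisymmetric function `M_α`, as a basis vector. -/
noncomputable def Mq (k : Type*) [CommRing k] (α : List ℕ) : QSymM k := Finsupp.single α 1

/-- The comultiplication of `QSym` (deconcatenation coproduct):
`Δ (M_β) = ∑ i, M_{(b₁,…,b_i)} ⊗ M_{(b_{i+1},…,b_ℓ)}`. -/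
noncomputable def comulQ (k : Type*) [CommRing k] : QSymM k →ₗ[k] QSymM k ⊗[k] QSymM k :=
  Finsupp.lsum k fun β => LinearMap.toSpanSingleton k _
    (∑ i ∈ Finset.range (β.length + 1), Mq k (β.take i) ⊗ₜ[k] Mq k (β.drop i))

/-- The counit of `QSym`: `ε (M_α) = 1` if `α = ()` and `0` otherwise. -/
noncomputable def counitQ (k : Type*) [CommRing k] : QSymM k →ₗ[k] k :=
  Finsupp.lsum k fun β => if β = [] then LinearMap.id else 0

/-- The algebra homomorphism `ε_P : QSym → k`, `f ↦ f (1, 0, 0, …)`: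
it sends `M_α ↦ 1` if `α` has length `≤ 1`, and `M_α ↦ 0` otherwise. -/
noncomputable def epsP (k : Type*) [CommRing k] : QSymM k →ₗ[k] k :=
  Finsupp.lsum k fun β => if β.length ≤ 1 then LinearMap.id else 0

/-- The projection of `QSym` onto its homogeneous component of degree `n`. -/
noncomputable def piQ (k : Type*) [CommRing k] (n : ℕ) : QSymM k →ₗ[k] QSymM k :=
  Finsupp.lsum k fun β => if β.sum = n then LinearMap.toSpanSingleton k _ (Mq k β) else 0

section QSymProduct

variable (k : Type*) [CommRing k]

/-- Prepending an entry to the indexing composition, linearly extended. -/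
noncomputable def mapConsQ (z : ℕ) : QSymM k →ₗ[k] QSymM k :=
  Finsupp.lmapDomain k k (fun l => z :: l)

/-- The quasi-shuffle (overlapping shuffle) product of two monomial quasisymmetric functions,
defined by the usual recursion; this is the product of `QSym` on the monomial basis. -/
noncomputable def qshuffle : List ℕ → List ℕ → QSymM k
  | [], b => Finsupp.single b 1
  | a :: as, [] => Finsupp.single (a :: as) 1
  | x :: xs, y :: ys =>
      mapConsQ k x (qshuffle xs (y :: ys)) + mapConsQ k y (qshuffle (x :: xs) ys) +
        mapConsQ k (x + y) (qshuffle xs ys)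
  termination_by a b => a.length + b.length

/-- The multiplication of `QSym`, as a linear map on the tensor square. -/
noncomputable def mulQ : QSymM k ⊗[k] QSymM k →ₗ[k] QSymM k :=
  TensorProduct.lift
    (Finsupp.lsum k fun α => LinearMap.toSpanSingleton k (QSymM k →ₗ[k] QSymM k)
      (Finsupp.lsum k fun β => LinearMap.toSpanSingleton k (QSymM k) (qshuffle k α β)))

/-- The unit of `QSym`. -/
noncomputable def unitQ : k →ₗ[k] QSymM k :=
  LinearMap.toSpanSingleton k (QSymM k) (Mq k [])

end QSymProduct

namespace Bern

theorem agree {k H M : Type*} [CommRing k] [CommRing H] [HopfAlgebra k H]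
    [AddCommGroup M] [Module k M]
    (ℋ : ℕ → Submodule k H)
    (hgcomul : ∀ n : ℕ, ∀ h ∈ ℋ n, Coalgebra.comul (R := k) h ∈
      ⨆ (p : ℕ × ℕ) (_ : p.1 + p.2 = n),
        LinearMap.range (TensorProduct.mapIncl (ℋ p.1) (ℋ p.2)))
    (F G : H ⊗[k] H →ₗ[k] M) (n : ℕ) (h : H) (hh : h ∈ ℋ n)
    (hFG : ∀ i j, i + j = n → ∀ x ∈ ℋ i, ∀ y ∈ ℋ j, F (x ⊗ₜ y) = G (x ⊗ₜ y)) :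
    F (Coalgebra.comul (R := k) h) = G (Coalgebra.comul (R := k) h) := by
  have key : (⨆ (p : ℕ × ℕ) (_ : p.1 + p.2 = n),
        LinearMap.range (TensorProduct.mapIncl (ℋ p.1) (ℋ p.2))) ≤ LinearMap.eqLocus F G := by
    refine iSup₂_le fun p hp => ?_
    rintro _ ⟨t, rfl⟩
    rw [LinearMap.mem_eqLocus]
    induction t with
    | zero => simp
    | add a b ha hb => simp only [map_add, ha, hb]
    | tmul x y => exact hFG p.1 p.2 hp x x.2 y y.2
  exact key (hgcomul n h hh)

theorem counit_zero {k H : Type*} [CommRing k] [CommRing H] [HopfAlgebra k H]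
    (ℋ : ℕ → Submodule k H) (π : ℕ → H →ₗ[k] H)
    (hconn : ℋ 0 = LinearMap.range (Algebra.linearMap k H))
    (hπ : ∀ n m : ℕ, ∀ h ∈ ℋ m, π n h = if n = m then h else 0)
    (hgcomul : ∀ n : ℕ, ∀ h ∈ ℋ n, Coalgebra.comul (R := k) h ∈
      ⨆ (p : ℕ × ℕ) (_ : p.1 + p.2 = n),
        LinearMap.range (TensorProduct.mapIncl (ℋ p.1) (ℋ p.2)))
    (n : ℕ) (hn : n ≠ 0) (h : H) (hh : h ∈ ℋ n) : Coalgebra.counit (R := k) h = 0 := by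
  have key := agree ℋ hgcomul
    (Coalgebra.counit (R := k) ∘ₗ π 0 ∘ₗ (TensorProduct.lid k H).toLinearMap ∘ₗ
      LinearMap.rTensor H (Coalgebra.counit (R := k)))
    (Coalgebra.counit (R := k) ∘ₗ π n ∘ₗ (TensorProduct.rid k H).toLinearMap ∘ₗ
      LinearMap.lTensor H (Coalgebra.counit (R := k))) n h hh (by
        intro i j hij x hx y hy
        simp only [LinearMap.comp_apply, LinearEquiv.coe_coe, LinearMap.rTensor_tmul,
          LinearMap.lTensor_tmul, TensorProduct.lid_tmul, TensorProduct.rid_tmul, map_smul,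
          hπ 0 j y hy, hπ n i x hx]
        by_cases hj : j = 0
        · have hi : n = i := by omega
          simp [hj, hi, mul_comm]
        · have hi : ¬ n = i := by omega
          simp [Ne.symm hj, hi])
  simp only [LinearMap.comp_apply, LinearEquiv.coe_coe, Coalgebra.rTensor_counit_comul,
    Coalgebra.lTensor_counit_comul, TensorProduct.lid_tmul, TensorProduct.rid_tmul, one_smul,
    hπ 0 n h hh, hπ n n h hh] at key
  simpa [Ne.symm hn] using key.symm

noncomputable def comps (n : ℕ) : Finset (List ℕ) :=
  (Finset.univ : Finset (Composition n)).image Composition.blocks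

theorem mem_comps (n : ℕ) (α : List ℕ) : α ∈ comps n ↔ IsComposition α ∧ α.sum = n := by
  simp only [comps, Finset.mem_image, Finset.mem_univ, true_and]
  constructor
  · rintro ⟨c, rfl⟩
    exact ⟨fun a ha => c.blocks_pos ha, c.blocks_sum⟩
  · rintro ⟨h1, h2⟩
    exact ⟨⟨α, fun {a} ha => h1 a ha, h2⟩, rfl⟩

theorem sum_comps {M : Type*} [AddCommMonoid M] (n : ℕ) (hn : n ≠ 0) (f : List ℕ → M) :
    ∑ α ∈ comps n, f α = ∑ a ∈ Finset.Icc 1 n, ∑ t ∈ comps (n - a), f (a :: t) := by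
  rw [Finset.sum_sigma']
  symm
  refine Finset.sum_bij (fun p _ => p.1 :: p.2) ?_ ?_ ?_ ?_
  · rintro ⟨a, t⟩ h
    simp only [Finset.mem_sigma, Finset.mem_Icc, mem_comps] at h ⊢
    obtain ⟨⟨h1, h2⟩, h3, h4⟩ := h
    refine ⟨?_, by simp only [List.sum_cons]; omega⟩
    intro b hb
    rcases List.mem_cons.1 hb with rfl | hb
    · omega
    · exact h3 b hb
  · rintro ⟨a, t⟩ _ ⟨b, u⟩ _ h
    simpa using h
  · intro α hα
    rw [mem_comps] at hα
    obtain ⟨h1, h2⟩ := hα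
    cases α with
    | nil => exact absurd h2.symm hn
    | cons a t =>
      have ha := h1 a (by simp)
      rw [List.sum_cons] at h2
      refine ⟨⟨a, t⟩, ?_, rfl⟩
      simp only [Finset.mem_sigma, Finset.mem_Icc, mem_comps]
      exact ⟨⟨ha, by omega⟩, fun b hb => h1 b (by simp [hb]), by omega⟩
  · intros; rfl

theorem epsP_single (k : Type*) [CommRing k] (l : List ℕ) (c : k) :
    epsP k (Finsupp.single l c) = if l.length ≤ 1 then c else 0 := by
  rw [epsP, Finsupp.lsum_single]; split_ifs <;> simp

theorem counitQ_single (k : Type*) [CommRing k] (l : List ℕ) (c : k) :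
    counitQ k (Finsupp.single l c) = if l = [] then c else 0 := by
  rw [counitQ, Finsupp.lsum_single]; split_ifs <;> simp

theorem epsP_mapCons (k : Type*) [CommRing k] (z : ℕ) (q : QSymM k) :
    epsP k (mapConsQ k z q) = counitQ k q := by
  have : epsP k ∘ₗ mapConsQ k z = counitQ k := by
    refine Finsupp.lhom_ext fun l c => ?_
    rw [LinearMap.comp_apply, mapConsQ, Finsupp.lmapDomain_apply, Finsupp.mapDomain_single,
      epsP_single, counitQ_single]
    simp
  exact LinearMap.congr_fun this q

theorem counitQ_mapCons (k : Type*) [CommRing k] (z : ℕ) (q : QSymM k) :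
    counitQ k (mapConsQ k z q) = 0 := by
  have : counitQ k ∘ₗ mapConsQ k z = 0 := by
    refine Finsupp.lhom_ext fun l c => ?_
    rw [LinearMap.comp_apply, mapConsQ, Finsupp.lmapDomain_apply, Finsupp.mapDomain_single,
      counitQ_single]
    simp
  exact LinearMap.congr_fun this q

theorem counitQ_qshuffle (k : Type*) [CommRing k] (a b : List ℕ) :
    counitQ k (qshuffle k a b) = if a = [] ∧ b = [] then 1 else 0 := by
  cases a <;> cases b <;> simp [qshuffle, counitQ_single, counitQ_mapCons]

theorem epsP_qshuffle (k : Type*) [CommRing k] (a b : List ℕ) :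
    epsP k (qshuffle k a b) = epsP k (Mq k a) * epsP k (Mq k b) := by
  cases a <;> cases b <;>
    simp [qshuffle, Mq, epsP_single, epsP_mapCons, counitQ_qshuffle, ← ite_and, and_comm]

theorem epsP_mul (k : Type*) [CommRing k] (p q : QSymM k) :
    epsP k (mulQ k (p ⊗ₜ q)) = epsP k p * epsP k q := by
  induction p using Finsupp.induction_linear with
  | zero => simp
  | add a b ha hb => simp only [TensorProduct.add_tmul, map_add, ha, hb, add_mul]
  | single a c =>
    induction q using Finsupp.induction_linear with
    | zero => simp
    | add a b ha hb => simp only [TensorProduct.tmul_add, map_add, ha, hb, mul_add]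
    | single b d =>
      have := epsP_qshuffle k a b
      simp only [mulQ, TensorProduct.lift.tmul, Finsupp.lsum_single,
        LinearMap.toSpanSingleton_apply, LinearMap.smul_apply, map_smul, this, Mq, epsP_single]
      split_ifs <;> simp [mul_comm]

theorem coef (k : Type*) [CommRing k] (SQ : QSymM k →ₗ[k] QSymM k)
    (hSQ₂ : mulQ k ∘ₗ TensorProduct.map LinearMap.id SQ ∘ₗ comulQ k = unitQ k ∘ₗ counitQ k)
    (α : List ℕ) : epsP k (SQ (Mq k α)) = (-1) ^ α.length := by
  have key : ∀ α : List ℕ, ∑ i ∈ Finset.range (α.length + 1),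
      epsP k (Mq k (α.take i)) * epsP k (SQ (Mq k (α.drop i))) = if α = [] then 1 else 0 := by
    intro α
    have := congrArg (epsP k) (LinearMap.congr_fun hSQ₂ (Mq k α))
    simp only [LinearMap.comp_apply, comulQ, unitQ] at this
    rw [Mq, Finsupp.lsum_single, counitQ_single] at this
    simp only [LinearMap.toSpanSingleton_apply, one_smul, map_sum, TensorProduct.map_tmul,
      epsP_mul, LinearMap.id_apply, map_smul] at this
    rw [this]
    simp [Mq, epsP_single]
  induction α with
  | nil => simpa [Mq, epsP_single] using key []
  | cons a t ih =>
    have := key (a :: t)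
    rw [List.length_cons, Finset.sum_range_succ', Finset.sum_range_succ'] at this
    rw [Finset.sum_eq_zero] at this
    · simp only [Mq, epsP_single] at this ih ⊢
      simp only [zero_add, List.take_succ_cons, List.take_zero, List.drop_succ_cons,
        List.drop_zero, List.length_cons, List.length_nil, le_refl, if_true, ih, one_mul,
        Nat.zero_le, reduceCtorEq, if_false] at this
      rw [List.length_cons, pow_succ]
      linear_combination this
    · intro i hi
      have hi := Finset.mem_range.1 hi
      have : ¬ ((a :: t).take (i + 1 + 1)).length ≤ 1 := by
        simp only [List.length_take, List.length_cons]; omega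
      rw [Mq, epsP_single, if_neg this, zero_mul]

theorem xi_zero {k H : Type*} [CommRing k] [CommRing H] [HopfAlgebra k H]
    (ℋ : ℕ → Submodule k H) (π : ℕ → H →ₗ[k] H)
    (hconn : ℋ 0 = LinearMap.range (Algebra.linearMap k H))
    (hπ : ∀ n m : ℕ, ∀ h ∈ ℋ m, π n h = if n = m then h else 0)
    (hgcomul : ∀ n : ℕ, ∀ h ∈ ℋ n, Coalgebra.comul (R := k) h ∈
      ⨆ (p : ℕ × ℕ) (_ : p.1 + p.2 = n),
        LinearMap.range (TensorProduct.mapIncl (ℋ p.1) (ℋ p.2)))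
    (α : List ℕ) : ∀ (n : ℕ) (_ : α.sum ≠ n) (h : H) (_ : h ∈ ℋ n), xiA π α h = 0 := by
  induction α with
  | nil =>
    intro n hn h hh
    simp [xiA, counit_zero ℋ π hconn hπ hgcomul n (fun e => hn (by simp [e])) h hh]
  | cons a t ih =>
    intro n hn h hh
    rw [List.sum_cons] at hn
    have := agree ℋ hgcomul (LinearMap.mul' k H ∘ₗ TensorProduct.map (π a) (xiA π t)) 0 n h hh (by
      intro i j hij x hx y hy
      simp only [LinearMap.comp_apply, TensorProduct.map_tmul, LinearMap.mul'_apply,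
        hπ a i x hx, LinearMap.zero_apply]
      split_ifs with hai
      · rw [ih j (by omega) y hy, mul_zero]
      · rw [zero_mul])
    simpa [xiA] using this

theorem takeuchi {k H : Type*} [CommRing k] [CommRing H] [HopfAlgebra k H]
    (ℋ : ℕ → Submodule k H) (π : ℕ → H →ₗ[k] H)
    (hconn : ℋ 0 = LinearMap.range (Algebra.linearMap k H))
    (hπ : ∀ n m : ℕ, ∀ h ∈ ℋ m, π n h = if n = m then h else 0)
    (hgcomul : ∀ n : ℕ, ∀ h ∈ ℋ n, Coalgebra.comul (R := k) h ∈
      ⨆ (p : ℕ × ℕ) (_ : p.1 + p.2 = n),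
        LinearMap.range (TensorProduct.mapIncl (ℋ p.1) (ℋ p.2)))
    (n : ℕ) : ∀ h ∈ ℋ n, HopfAlgebra.antipode (R := k) h =
      ∑ α ∈ comps n, ((-1 : k) ^ α.length) • xiA π α h := by
  induction n using Nat.strong_induction_on with
  | _ n ih =>
  intro h hh
  by_cases hn : n = 0
  · subst hn
    have h0 : comps 0 = {[]} := by
      ext α
      rw [mem_comps, Finset.mem_singleton]
      constructor
      · rintro ⟨h1, h2⟩
        cases α with
        | nil => rfl
        | cons a t =>
          have := h1 a (by simp)
          rw [List.sum_cons] at h2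
          omega
      · rintro rfl
        exact ⟨fun a ha => by simp at ha, rfl⟩
    rw [hconn] at hh
    obtain ⟨c, rfl⟩ := hh
    rw [h0, Finset.sum_singleton]
    simp [xiA, Algebra.algebraMap_eq_smul_one]
  · have key := agree ℋ hgcomul
      (LinearMap.mul' k H ∘ₗ LinearMap.lTensor H (HopfAlgebra.antipode k))
      (HopfAlgebra.antipode k ∘ₗ (TensorProduct.lid k H).toLinearMap ∘ₗ
        LinearMap.rTensor H (Coalgebra.counit (R := k)) +
       ∑ a ∈ Finset.Icc 1 n, ∑ t ∈ comps (n - a), ((-1 : k) ^ t.length) •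
        (LinearMap.mul' k H ∘ₗ TensorProduct.map (π a) (xiA π t))) n h hh (by
        intro i j hij x hx y hy
        simp only [LinearMap.comp_apply, LinearMap.add_apply, LinearMap.sum_apply,
          LinearMap.smul_apply, LinearEquiv.coe_coe, LinearMap.rTensor_tmul,
          LinearMap.lTensor_tmul, TensorProduct.lid_tmul, TensorProduct.map_tmul,
          LinearMap.mul'_apply, map_smul]
        by_cases hi : i = 0
        · subst hi
          rw [Finset.sum_eq_zero]
          · rw [hconn] at hx
            obtain ⟨c, rfl⟩ := hx
            simp [Algebra.algebraMap_eq_smul_one]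
          · intro a ha
            have := Finset.mem_Icc.1 ha
            refine Finset.sum_eq_zero fun t _ => ?_
            rw [hπ a 0 x hx, if_neg (by omega), zero_mul, smul_zero]
        · rw [counit_zero ℋ π hconn hπ hgcomul i hi x hx, zero_smul, zero_add,
            Finset.sum_eq_single i]
          · have hj : n - i = j := by omega
            rw [hj, ih j (by omega) y hy, Finset.mul_sum]
            refine Finset.sum_congr rfl fun t _ => ?_
            rw [hπ i i x hx, if_pos rfl, mul_smul_comm]
          · intro a _ ha
            refine Finset.sum_eq_zero fun t _ => ?_
            rw [hπ a i x hx, if_neg ha, zero_mul, smul_zero]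
          · intro h'
            exact absurd (Finset.mem_Icc.2 ⟨by omega, by omega⟩) h')
    simp only [LinearMap.comp_apply, LinearMap.add_apply, LinearMap.sum_apply,
      LinearMap.smul_apply, LinearEquiv.coe_coe, Coalgebra.rTensor_counit_comul,
      TensorProduct.lid_tmul, one_smul, HopfAlgebra.mul_antipode_lTensor_comul_apply,
      counit_zero ℋ π hconn hπ hgcomul n hn h hh, map_zero] at key
    rw [sum_comps n hn, eq_neg_of_add_eq_zero_left key.symm]
    simp only [List.length_cons, pow_succ, mul_neg, mul_one, neg_smul, Finset.sum_neg_distrib,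
      xiA, LinearMap.comp_apply]

end Bern

/-- Let `H` be a commutative connected graded `k`-Hopf algebra (grading `ℋ`, graded projections
`π`), with Bernstein homomorphism `β_H : H → H ⊗ QSym`, `β_H(h) = ∑_α ξ_α(h) ⊗ M_α`, where
`ξ_α = m^{(m-1)} ∘ π_α ∘ Δ^{(m-1)}`.  Let `S_QSym` be the antipode of `QSym` (a linear map `SQ`
satisfying the two antipode identities for the bialgebra `QSym`) and `ε_P : QSym → k`,
`f ↦ f(1,0,0,…)`.  Then the antipode of `H` satisfies
`S_H = (id_H ⊗ (ε_P ∘ S_QSym)) ∘ β_H`. -/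
theorem antipode_eq_bernstein_formula {k H : Type*} [CommRing k] [CommRing H]
    [HopfAlgebra k H]
    (ℋ : ℕ → Submodule k H) (π : ℕ → H →ₗ[k] H)
    (hdec : DirectSum.IsInternal ℋ)
    (hconn : ℋ 0 = LinearMap.range (Algebra.linearMap k H))
    (hπ : ∀ n m : ℕ, ∀ h ∈ ℋ m, π n h = if n = m then h else 0)
    (hgmul : ∀ i j : ℕ, ℋ i * ℋ j ≤ ℋ (i + j))
    (hgcomul : ∀ n : ℕ, ∀ h ∈ ℋ n, Coalgebra.comul (R := k) h ∈
      ⨆ (p : ℕ × ℕ) (_ : p.1 + p.2 = n),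
        LinearMap.range (TensorProduct.mapIncl (ℋ p.1) (ℋ p.2)))
    (SQ : QSymM k →ₗ[k] QSymM k)
    (hSQ₁ : mulQ k ∘ₗ TensorProduct.map SQ LinearMap.id ∘ₗ comulQ k = unitQ k ∘ₗ counitQ k)
    (hSQ₂ : mulQ k ∘ₗ TensorProduct.map LinearMap.id SQ ∘ₗ comulQ k = unitQ k ∘ₗ counitQ k) :
    ∀ h : H,
      HopfAlgebra.antipode (R := k) h =
        ∑ᶠ α ∈ {α : List ℕ | IsComposition α}, epsP k (SQ (Mq k α)) • xiA π α h := by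
  have hc : ∀ α, epsP k (SQ (Mq k α)) = (-1) ^ α.length := Bern.coef k SQ hSQ₂
  simp only [hc]
  have main : ∀ h : H, ({α : List ℕ | IsComposition α} ∩ Function.support
        fun α => ((-1 : k) ^ α.length) • xiA π α h).Finite ∧
      HopfAlgebra.antipode (R := k) h =
        ∑ᶠ α ∈ {α : List ℕ | IsComposition α}, ((-1 : k) ^ α.length) • xiA π α h := by
    intro h
    have hmem : h ∈ ⨆ n, ℋ n := by
      rw [hdec.submodule_iSup_eq_top]; exact Submodule.mem_top
    induction hmem using Submodule.iSup_induction' with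
    | zero => simp
    | mem n x hx =>
      have hsub : ({α : List ℕ | IsComposition α} ∩ Function.support
          fun α => ((-1 : k) ^ α.length) • xiA π α x) ⊆ ↑(Bern.comps n) := by
        rintro α ⟨h1, h2⟩
        rw [Finset.mem_coe, Bern.mem_comps]
        refine ⟨h1, ?_⟩
        by_contra h3
        exact h2 (by
          simp only [Bern.xi_zero ℋ π hconn hπ hgcomul α n h3 x hx, smul_zero])
      refine ⟨(Bern.comps n).finite_toSet.subset hsub, ?_⟩
      rw [Bern.takeuchi ℋ π hconn hπ hgcomul n x hx]
      symm
      refine finsum_mem_eq_sum_of_inter_support_eq _ ?_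
      ext α
      constructor
      · intro h'
        exact ⟨hsub h', h'.2⟩
      · rintro ⟨h1, h2⟩
        exact ⟨((Bern.mem_comps n α).1 (Finset.mem_coe.1 h1)).1, h2⟩
    | add x y _ _ hx hy =>
      have hxy := finsum_mem_add_distrib' hx.1 hy.1
      constructor
      · refine (hx.1.union hy.1).subset ?_
        rintro α ⟨h1, h2⟩
        by_contra h3
        simp only [Set.mem_union, Set.mem_inter_iff, h1, true_and, Function.mem_support,
          not_or, not_not] at h3
        exact h2 (by simp only [map_add, smul_add, h3.1, h3.2, add_zero])
      · rw [map_add, hx.2, hy.2, ← hxy]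
        simp only [map_add, smul_add]
  exact fun h => (main h).2
end

section
/- Let H be a commutative connected graded k-Hopf algebra with Bernstein homomorphism β_H : H → H ⊗ QSym defined by β_H(h) = Σ_α ξ_α(h) ⊗ M_α, where ξ_α = m^{(k−1)} ∘ π_α ∘ Δ^{(k−1)} for α = (a₁,…,a_k). Then β_H ∘ S_H = (id_H ⊗ S_QSym) ∘ β_H, where S_H and S_QSym are the antipodes of H and QSym respectively. -/
open TensorProduct

open TensorProduct

section QSymHelpers

variable (k : Type*) [CommRing k]

/-- One step of the antipode recursion on a basis vector. -/
noncomputable def bvec (a : ℕ) : List ℕ → QSymM k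
  | [] => -Mq k [a]
  | d :: t => -(Mq k (a :: d :: t) + Mq k ((d + a) :: t))

/-- One step of the antipode recursion. -/
noncomputable def stepU (a : ℕ) : QSymM k →ₗ[k] QSymM k :=
  Finsupp.lsum k fun δ => LinearMap.toSpanSingleton k _ (bvec k a δ)

/-- The explicit antipode of a monomial quasisymmetric function. -/
noncomputable def antiT (α : List ℕ) : QSymM k := α.foldl (fun f a => stepU k a f) (Mq k [])

lemma antiT_nil : antiT k [] = Mq k [] := rfl

lemma antiT_snoc (β : List ℕ) (a : ℕ) : antiT k (β ++ [a]) = stepU k a (antiT k β) := by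
  simp [antiT]

lemma stepU_Mq (a : ℕ) (δ : List ℕ) : stepU k a (Mq k δ) = bvec k a δ := by
  simp [stepU, Mq]

lemma mulQ_Mq (α β : List ℕ) : mulQ k (Mq k α ⊗ₜ[k] Mq k β) = qshuffle k α β := by
  simp [mulQ, Mq]

lemma qshuffle_nil (α : List ℕ) : qshuffle k α [] = Mq k α := by
  cases α <;> simp [qshuffle, Mq]

lemma nil_qshuffle (α : List ℕ) : qshuffle k [] α = Mq k α := by
  simp [qshuffle, Mq]

lemma mulQ_Mq_nil (f : QSymM k) : mulQ k (f ⊗ₜ[k] Mq k []) = f := by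
  have : mulQ k ∘ₗ (TensorProduct.mk k _ _).flip (Mq k []) = LinearMap.id := by
    refine Finsupp.lhom_ext' fun α => LinearMap.ext_ring ?_
    change mulQ k (Mq k α ⊗ₜ[k] Mq k []) = Mq k α
    rw [mulQ_Mq, qshuffle_nil]
  exact LinearMap.congr_fun this f

lemma mapConsQ_Mq (a : ℕ) (δ : List ℕ) : mapConsQ k a (Mq k δ) = Mq k (a :: δ) := by
  simp [mapConsQ, Mq, Finsupp.mapDomain_single]

/-- The part of the product whose first letter is the first letter of the left factor. -/
noncomputable def firstN (r : List ℕ) : QSymM k →ₗ[k] QSymM k :=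
  Finsupp.lsum k fun δ => LinearMap.toSpanSingleton k _
    (match δ with
      | [] => 0
      | d :: t => mapConsQ k d (qshuffle k t r))

lemma firstN_nil (r : List ℕ) : firstN k r (Mq k []) = 0 := by simp [firstN, Mq]

lemma firstN_cons (r : List ℕ) (d : ℕ) (t : List ℕ) :
    firstN k r (Mq k (d :: t)) = mapConsQ k d (qshuffle k t r) := by simp [firstN, Mq]

/-- The telescoping sum. -/
noncomputable def teleG : List ℕ → QSymM k → QSymM k
  | [], f => mulQ k (f ⊗ₜ[k] Mq k [])
  | c :: r, f => mulQ k (f ⊗ₜ[k] Mq k (c :: r)) + teleG r (stepU k c f)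

lemma split_mul (c : ℕ) (r : List ℕ) (f : QSymM k) :
    mulQ k (f ⊗ₜ[k] Mq k (c :: r)) + firstN k r (stepU k c f) = firstN k (c :: r) f := by
  have : mulQ k ∘ₗ (TensorProduct.mk k _ _).flip (Mq k (c :: r)) + firstN k r ∘ₗ stepU k c
      = firstN k (c :: r) := by
    refine Finsupp.lhom_ext' fun δ => LinearMap.ext_ring ?_
    change mulQ k (Mq k δ ⊗ₜ[k] Mq k (c :: r)) + firstN k r (stepU k c (Mq k δ))
      = firstN k (c :: r) (Mq k δ)
    rw [mulQ_Mq, stepU_Mq]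
    cases δ with
    | nil =>
      rw [bvec, map_neg, firstN_cons, firstN_nil, nil_qshuffle, nil_qshuffle, mapConsQ_Mq]
      simp
    | cons d t =>
      rw [bvec, map_neg, map_add, firstN_cons, firstN_cons, firstN_cons, qshuffle]
      abel
  exact LinearMap.congr_fun this f

lemma firstN_empty_stepU (c : ℕ) (f : QSymM k) : firstN k [] (stepU k c f) = stepU k c f := by
  have : firstN k [] ∘ₗ stepU k c = stepU k c := by
    refine Finsupp.lhom_ext' fun δ => LinearMap.ext_ring ?_
    change firstN k [] (stepU k c (Mq k δ)) = stepU k c (Mq k δ)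
    rw [stepU_Mq]
    cases δ <;> simp [bvec, firstN_cons, qshuffle_nil, mapConsQ_Mq]
  exact LinearMap.congr_fun this f

lemma teleG_cons (c : ℕ) (r : List ℕ) (f : QSymM k) :
    teleG k (c :: r) f = firstN k (c :: r) f := by
  induction r generalizing c f with
  | nil => rw [teleG, teleG, mulQ_Mq_nil, ← split_mul, firstN_empty_stepU]
  | cons d r ih => rw [teleG, ih, split_mul]

lemma sum_eq_teleG (r p : List ℕ) :
    ∑ i ∈ Finset.range (r.length + 1),
      mulQ k (antiT k (p ++ r.take i) ⊗ₜ[k] Mq k (r.drop i)) = teleG k r (antiT k p) := by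
  induction r generalizing p with
  | nil => simp [teleG]
  | cons c r ih =>
    rw [List.length_cons, Finset.sum_range_succ', teleG, ← antiT_snoc, ← ih]
    simp [add_comm]

lemma SQ_eq_antiT (SQ : QSymM k →ₗ[k] QSymM k)
    (hSQ₁ : mulQ k ∘ₗ TensorProduct.map SQ LinearMap.id ∘ₗ comulQ k = unitQ k ∘ₗ counitQ k)
    (α : List ℕ) : SQ (Mq k α) = antiT k α := by
  induction hn : α.length using Nat.strong_induction_on generalizing α with
  | _ n ih =>
  have h := LinearMap.congr_fun hSQ₁ (Mq k α)
  have h1 : comulQ k (Mq k α) =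
      ∑ i ∈ Finset.range (α.length + 1), Mq k (α.take i) ⊗ₜ[k] Mq k (α.drop i) := by
    simp [comulQ, Mq]
  have h2 := sum_eq_teleG k α []
  have h3 : unitQ k (counitQ k (Mq k α)) = teleG k α (antiT k []) := by
    cases α with
    | nil => rw [teleG, mulQ_Mq_nil, antiT_nil]; simp [counitQ, unitQ, Mq]
    | cons c r => rw [teleG_cons, antiT_nil, firstN_nil]; simp [counitQ, Mq]
  rw [LinearMap.comp_apply, LinearMap.comp_apply, LinearMap.comp_apply, h1, h3, ← h2] at h
  simp only [map_sum, TensorProduct.map_tmul, LinearMap.id_apply, List.nil_append] at h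
  rw [Finset.sum_range_succ, Finset.sum_range_succ] at h
  have h4 : ∀ i ∈ Finset.range α.length, SQ (Mq k (α.take i)) = antiT k (α.take i) := by
    intro i hi
    rw [Finset.mem_range] at hi
    exact ih i (by omega) _ (by simp; omega)
  rw [Finset.sum_congr rfl fun i hi => by rw [h4 i hi]] at h
  have h5 := add_left_cancel h
  simpa [mulQ_Mq_nil] using h5

lemma stepU_apply_nil (a : ℕ) (f : QSymM k) : stepU k a f [] = 0 := by
  induction f using Finsupp.induction_linear with
  | zero => simp
  | add f g hf hg => simp [hf, hg]
  | single δ r =>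
    have : Finsupp.single δ r = r • Mq k δ := by simp [Mq]
    rw [this, map_smul, stepU_Mq]
    cases δ <;> simp [bvec, Mq]

lemma stepU_apply_cons (a c : ℕ) (t : List ℕ) (f : QSymM k) :
    stepU k a f (c :: t) =
      -((if a = c then f t else 0) + (if a ≤ c then f ((c - a) :: t) else 0)) := by
  induction f using Finsupp.induction_linear with
  | zero => simp
  | add f g hf hg =>
    rw [map_add, Finsupp.add_apply, hf, hg, Finsupp.add_apply, Finsupp.add_apply]
    split_ifs <;> ring
  | single δ r =>
    have : Finsupp.single δ r = r • Mq k δ := by simp [Mq]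
    rw [this, map_smul, stepU_Mq]
    cases δ with
    | nil => simp [bvec, Mq, Finsupp.single_apply]; grind
    | cons d δ =>
      simp only [bvec, Mq, Finsupp.single_apply, Finsupp.smul_apply, Finsupp.neg_apply,
        Finsupp.add_apply, List.cons.injEq, smul_eq_mul]
      have e : (d + a = c ∧ δ = t) ↔ (a ≤ c ∧ d = c - a ∧ δ = t) := by
        constructor
        · rintro ⟨h, h'⟩; exact ⟨by omega, by omega, h'⟩
        · rintro ⟨h, h', h''⟩; exact ⟨by omega, h''⟩
      simp only [e]
      grind

lemma antiT_supp (α : List ℕ) (hα : IsComposition α) (γ : List ℕ) (h : antiT k α γ ≠ 0) :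
    IsComposition γ ∧ γ.sum = α.sum := by
  induction α using List.reverseRecOn generalizing γ with
  | nil =>
    rw [antiT_nil, Mq, Finsupp.single_apply] at h
    have : [] = γ := by by_contra h'; simp [h'] at h
    subst this
    exact ⟨hα, rfl⟩
  | append_singleton β a ih =>
    have hβ : IsComposition β := fun x hx => hα x (by simp [hx])
    have ha : 0 < a := hα a (by simp)
    rw [antiT_snoc] at h
    cases γ with
    | nil => exact absurd (stepU_apply_nil k a _) h
    | cons c t =>
      rw [stepU_apply_cons] at h
      by_cases h1 : a = c ∧ antiT k β t ≠ 0
      · obtain ⟨rfl, h1⟩ := h1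
        obtain ⟨h2, h3⟩ := ih hβ t h1
        refine ⟨?_, by simp; omega⟩
        intro x hx
        rcases List.mem_cons.1 hx with rfl | hx
        · exact ha
        · exact h2 x hx
      · have h4 : a ≤ c ∧ antiT k β ((c - a) :: t) ≠ 0 := by grind
        obtain ⟨h2, h3⟩ := ih hβ _ h4.2
        refine ⟨?_, by simp at h3 ⊢; omega⟩
        intro x hx
        rcases List.mem_cons.1 hx with rfl | hx
        · omega
        · exact h2 x (by simp [hx])

end QSymHelpers

lemma comp_finite (N : ℕ) : {α : List ℕ | IsComposition α ∧ α.sum ≤ N}.Finite := by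
  refine (Set.finite_range
    (fun c : Σ n : Fin (N + 1), Composition (n : ℕ) => c.2.blocks)).subset ?_
  rintro α ⟨h1, h2⟩
  exact ⟨⟨⟨α.sum, by omega⟩, ⟨α, fun {i} hi => h1 i hi, rfl⟩⟩, rfl⟩

section HopfHelpers

open WithConv Coalgebra

variable {k H : Type*} [CommRing k] [CommRing H] [HopfAlgebra k H]

/-- The antipode reverses convolution products. -/
lemma conv_comp_antipode (f g : H →ₗ[k] H) :
    toConv ((toConv f * toConv g).ofConv ∘ₗ HopfAlgebra.antipode k) =
      toConv (g ∘ₗ HopfAlgebra.antipode k) * toConv (f ∘ₗ HopfAlgebra.antipode k) := by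
  let i1 : WithConv (H →ₐ[k] H ⊗[k] H) := toConv Algebra.TensorProduct.includeLeft
  let i2 : WithConv (H →ₐ[k] H ⊗[k] H) := toConv Algebra.TensorProduct.includeRight
  have h1 : i1 * i2 = toConv (Bialgebra.comulAlgHom k H) := by
    apply WithConv.ofConv_injective
    ext h
    change (i1 * i2) h = comul (R := k) h
    rw [AlgHom.convMul_apply]
    conv_rhs => rw [← (ℛ k h).eq]
    conv_lhs => rw [← (ℛ k h).eq]
    simp [i1, i2]
  have h2 : (toConv (Bialgebra.comulAlgHom k H))⁻¹ = i2⁻¹ * i1⁻¹ := by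
    rw [← h1]
    exact mul_inv_rev i1 i2
  have h3 : ∀ h : H, comul (R := k) (HopfAlgebra.antipode k h) =
      ∑ i ∈ (ℛ k h).index, HopfAlgebra.antipode k ((ℛ k h).right i) ⊗ₜ[k]
        HopfAlgebra.antipode k ((ℛ k h).left i) := by
    intro h
    have h4 : (toConv (Bialgebra.comulAlgHom k H))⁻¹ h = (i2⁻¹ * i1⁻¹) h := by rw [h2]
    have h5 : (toConv (Bialgebra.comulAlgHom k H))⁻¹ h =
      comul (R := k) (HopfAlgebra.antipode k h) := rfl
    rw [← h5, h4, AlgHom.convMul_apply]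
    conv_lhs => rw [← (ℛ k h).eq]
    rw [map_sum]
    refine Finset.sum_congr rfl fun i _ => ?_
    rw [Algebra.TensorProduct.lift_tmul]
    change (1 ⊗ₜ[k] HopfAlgebra.antipode k ((ℛ k h).left i) : H ⊗[k] H) *
      (HopfAlgebra.antipode k ((ℛ k h).right i) ⊗ₜ[k] 1) = _
    simp
  apply WithConv.ofConv_injective
  ext h
  change LinearMap.mul' k H (TensorProduct.map f g (comul (R := k) (HopfAlgebra.antipode k h))) =
    LinearMap.mul' k H (TensorProduct.map _ _ (comul (R := k) h))
  rw [h3]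
  conv_rhs => rw [← (ℛ k h).eq]
  simp [mul_comm]

/-- `ξ_α` in the convolution algebra. -/
noncomputable def xiC (π : ℕ → H →ₗ[k] H) (α : List ℕ) : WithConv (H →ₗ[k] H) :=
  toConv (xiA π α)

/-- `ξ_α ∘ S` in the convolution algebra. -/
noncomputable def xiS (π : ℕ → H →ₗ[k] H) (α : List ℕ) : WithConv (H →ₗ[k] H) :=
  toConv (xiA π α ∘ₗ HopfAlgebra.antipode k)

lemma xiC_nil (π : ℕ → H →ₗ[k] H) : xiC π [] = 1 := rfl

lemma xiC_cons (π : ℕ → H →ₗ[k] H) (a : ℕ) (t : List ℕ) :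
    xiC π (a :: t) = toConv (π a) * xiC π t := rfl

lemma xiC_snoc (π : ℕ → H →ₗ[k] H) (a : ℕ) (t : List ℕ) :
    xiC π (t ++ [a]) = xiC π t * toConv (π a) := by
  induction t with
  | nil => simp [xiC_cons, xiC_nil]
  | cons b t ih => rw [List.cons_append, xiC_cons, ih, xiC_cons, mul_assoc]

lemma xiS_nil (π : ℕ → H →ₗ[k] H) : xiS π [] = 1 := by
  apply WithConv.ofConv_injective
  ext h
  change algebraMap k H (counit (R := k) (HopfAlgebra.antipode k h)) =
    algebraMap k H (counit (R := k) h)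
  rw [HopfAlgebra.counit_antipode]

lemma xiS_cons (π : ℕ → H →ₗ[k] H) (a : ℕ) (t : List ℕ) :
    xiS π (a :: t) = xiS π t * toConv (π a ∘ₗ HopfAlgebra.antipode k) :=
  conv_comp_antipode (π a) (xiA π t)

section Graded

variable {ℋ : ℕ → Submodule k H} {π : ℕ → H →ₗ[k] H}

lemma top_induction (hdec : DirectSum.IsInternal ℋ) {P : H → Prop}
    (h1 : ∀ n, ∀ h ∈ ℋ n, P h) (h2 : ∀ x y, P x → P y → P (x + y)) (h : H) : P h := by
  have hh : h ∈ ⨆ n, ℋ n := by rw [hdec.submodule_iSup_eq_top]; trivial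
  induction hh using Submodule.iSup_induction' with
  | mem i x hx => exact h1 i x hx
  | zero => exact h1 0 0 (zero_mem _)
  | add x y _ _ hx hy => exact h2 x y hx hy

lemma comul_agree
    (hgcomul : ∀ n : ℕ, ∀ h ∈ ℋ n, Coalgebra.comul (R := k) h ∈
      ⨆ (p : ℕ × ℕ) (_ : p.1 + p.2 = n),
        LinearMap.range (TensorProduct.mapIncl (ℋ p.1) (ℋ p.2)))
    {M : Type*} [AddCommGroup M] [Module k M] (F G : H ⊗[k] H →ₗ[k] M) (n : ℕ)
    (hFG : ∀ i j, i + j = n → ∀ x ∈ ℋ i, ∀ y ∈ ℋ j, F (x ⊗ₜ y) = G (x ⊗ₜ y))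
    (h : H) (hh : h ∈ ℋ n) : F (comul h) = G (comul h) := by
  have : (⨆ (p : ℕ × ℕ) (_ : p.1 + p.2 = n),
        LinearMap.range (TensorProduct.mapIncl (ℋ p.1) (ℋ p.2))) ≤ LinearMap.eqLocus F G := by
    refine iSup₂_le fun p hp => ?_
    rintro _ ⟨z, rfl⟩
    rw [LinearMap.mem_eqLocus]
    induction z using TensorProduct.induction_on with
    | zero => simp
    | tmul x y => exact hFG p.1 p.2 hp x x.2 y y.2
    | add x y hx hy => rw [map_add, map_add, map_add, hx, hy]
  exact this (hgcomul n h hh)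

lemma pi_algebraMap (hconn : ℋ 0 = LinearMap.range (Algebra.linearMap k H))
    (hπ : ∀ n m : ℕ, ∀ h ∈ ℋ m, π n h = if n = m then h else 0) (n : ℕ) (r : k) :
    π n (algebraMap k H r) = if n = 0 then algebraMap k H r else 0 :=
  hπ n 0 _ (by rw [hconn]; exact ⟨r, rfl⟩)

/-- The degree-zero projection is the convolution unit. -/
lemma pi_zero (hdec : DirectSum.IsInternal ℋ)
    (hconn : ℋ 0 = LinearMap.range (Algebra.linearMap k H))
    (hπ : ∀ n m : ℕ, ∀ h ∈ ℋ m, π n h = if n = m then h else 0)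
    (hgcomul : ∀ n : ℕ, ∀ h ∈ ℋ n, Coalgebra.comul (R := k) h ∈
      ⨆ (p : ℕ × ℕ) (_ : p.1 + p.2 = n),
        LinearMap.range (TensorProduct.mapIncl (ℋ p.1) (ℋ p.2))) :
    toConv (π 0) = 1 := by
  let e : H →ₗ[k] H := (1 : WithConv (H →ₗ[k] H)).ofConv
  have he : ∀ r, e (algebraMap k H r) = algebraMap k H r := by
    intro r
    change algebraMap k H (counit (R := k) (algebraMap k H r)) = _
    simp
  apply WithConv.ofConv_injective
  refine LinearMap.ext fun h => ?_
  refine top_induction hdec (P := fun h => π 0 h = e h) ?_ ?_ h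
  · intro n h hh
    have h1 : (toConv (π 0) * 1 : WithConv (H →ₗ[k] H)) h = π 0 h := by rw [mul_one]
    have h2 : (1 * toConv (e ∘ₗ π n) : WithConv (H →ₗ[k] H)) h = e (π n h) := by
      rw [one_mul]; rfl
    have h3 : π n h = h := by rw [hπ n n h hh, if_pos rfl]
    rw [h3] at h2
    rw [← h1, ← h2]
    refine comul_agree hgcomul (LinearMap.mul' k H ∘ₗ TensorProduct.map (π 0) e)
      (LinearMap.mul' k H ∘ₗ TensorProduct.map e (e ∘ₗ π n)) n ?_ h hh
    intro i j hij x hx y hy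
    simp only [LinearMap.comp_apply, TensorProduct.map_tmul, LinearMap.mul'_apply]
    rw [hπ 0 i x hx, hπ n j y hy]
    by_cases hi : i = 0
    · subst hi
      have hj : n = j := by omega
      rw [hconn] at hx
      obtain ⟨r, rfl⟩ := hx
      rw [if_pos rfl, if_pos hj, Algebra.linearMap_apply, he]
    · rw [if_neg (by omega), if_neg (by omega)]
      simp
  · intro x y hx hy
    simp [hx, hy]

lemma xiA_vanish (hdec : DirectSum.IsInternal ℋ)
    (hconn : ℋ 0 = LinearMap.range (Algebra.linearMap k H))
    (hπ : ∀ n m : ℕ, ∀ h ∈ ℋ m, π n h = if n = m then h else 0)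
    (hgcomul : ∀ n : ℕ, ∀ h ∈ ℋ n, Coalgebra.comul (R := k) h ∈
      ⨆ (p : ℕ × ℕ) (_ : p.1 + p.2 = n),
        LinearMap.range (TensorProduct.mapIncl (ℋ p.1) (ℋ p.2)))
    (α : List ℕ) (n : ℕ) (hn : n ≠ α.sum) (h : H) (hh : h ∈ ℋ n) : xiA π α h = 0 := by
  induction α generalizing n h with
  | nil =>
    have h1 := pi_zero hdec hconn hπ hgcomul
    have h2 : π 0 h = xiA π [] h := by
      change (toConv (π 0)) h = (1 : WithConv (H →ₗ[k] H)) h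
      rw [h1]
    rw [← h2, hπ 0 n h hh, if_neg]
    simpa using hn.symm
  | cons a t ih =>
    refine comul_agree hgcomul (LinearMap.mul' k H ∘ₗ TensorProduct.map (π a) (xiA π t)) 0 n
      ?_ h hh
    intro i j hij x hx y hy
    simp only [LinearMap.comp_apply, TensorProduct.map_tmul, LinearMap.mul'_apply,
      LinearMap.zero_apply]
    rw [hπ a i x hx]
    by_cases hi : a = i
    · rw [ih j (by simp at hn; omega) y hy, mul_zero]
    · rw [if_neg hi, zero_mul]

lemma xiA_bounded (hdec : DirectSum.IsInternal ℋ)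
    (hconn : ℋ 0 = LinearMap.range (Algebra.linearMap k H))
    (hπ : ∀ n m : ℕ, ∀ h ∈ ℋ m, π n h = if n = m then h else 0)
    (hgcomul : ∀ n : ℕ, ∀ h ∈ ℋ n, Coalgebra.comul (R := k) h ∈
      ⨆ (p : ℕ × ℕ) (_ : p.1 + p.2 = n),
        LinearMap.range (TensorProduct.mapIncl (ℋ p.1) (ℋ p.2)))
    (h : H) : ∃ N, ∀ α : List ℕ, N < α.sum → xiA π α h = 0 := by
  refine top_induction hdec (P := fun h => ∃ N, ∀ α : List ℕ, N < α.sum → xiA π α h = 0)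
    ?_ ?_ h
  · intro n h hh
    exact ⟨n, fun α hα => xiA_vanish hdec hconn hπ hgcomul α n hα.ne h hh⟩
  · rintro x y ⟨N, hN⟩ ⟨M, hM⟩
    refine ⟨max N M, fun α hα => ?_⟩
    rw [map_add, hN α (lt_of_le_of_lt (le_max_left _ _) hα),
      hM α (lt_of_le_of_lt (le_max_right _ _) hα), add_zero]

lemma pi_mul (hdec : DirectSum.IsInternal ℋ)
    (hπ : ∀ n m : ℕ, ∀ h ∈ ℋ m, π n h = if n = m then h else 0)
    (hgmul : ∀ i j : ℕ, ℋ i * ℋ j ≤ ℋ (i + j)) (c : ℕ) (x y : H) :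
    π c (x * y) = ∑ p ∈ Finset.HasAntidiagonal.antidiagonal c, π p.1 x * π p.2 y := by
  revert y
  refine top_induction hdec
    (P := fun x => ∀ y, π c (x * y) = ∑ p ∈ Finset.HasAntidiagonal.antidiagonal c, π p.1 x * π p.2 y) ?_ ?_ x
  · intro i x hx y
    refine top_induction hdec
      (P := fun y => π c (x * y) = ∑ p ∈ Finset.HasAntidiagonal.antidiagonal c, π p.1 x * π p.2 y) ?_ ?_ y
    · intro j y hy
      rw [hπ c (i + j) _ (hgmul i j (Submodule.mul_mem_mul hx hy))]
      have : ∀ p : ℕ × ℕ, π p.1 x * π p.2 y = if (i, j) = p then x * y else 0 := by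
        intro p
        rw [hπ p.1 i x hx, hπ p.2 j y hy]
        grind
      simp only [this]
      rw [Finset.sum_ite_eq]
      simp [eq_comm]
    · intro y z hy hz
      simp only [mul_add, map_add, hy, hz, Finset.sum_add_distrib]
  · intro x z hx hz y
    simp only [add_mul, map_add, hx, hz, Finset.sum_add_distrib]

lemma takeuchi (hdec : DirectSum.IsInternal ℋ)
    (hconn : ℋ 0 = LinearMap.range (Algebra.linearMap k H))
    (hπ : ∀ n m : ℕ, ∀ h ∈ ℋ m, π n h = if n = m then h else 0)
    (hgmul : ∀ i j : ℕ, ℋ i * ℋ j ≤ ℋ (i + j)) (c : ℕ) (hc : 0 < c) :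
    ∑ i ∈ Finset.range (c + 1),
      toConv (π (c - i) ∘ₗ HopfAlgebra.antipode k) * toConv (π i) = 0 := by
  have h0 : ∑ p ∈ Finset.HasAntidiagonal.antidiagonal c,
      toConv (π p.1 ∘ₗ HopfAlgebra.antipode k) * toConv (π p.2) = 0 := by
    apply WithConv.ofConv_injective
    refine LinearMap.ext fun h => ?_
    have h1 : (toConv (HopfAlgebra.antipode k) * toConv LinearMap.id :
        WithConv (H →ₗ[k] H)) h = algebraMap k H (counit (R := k) h) := by
      rw [LinearMap.antipode_mul_id]; rfl
    have h2 := congrArg (π c) h1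
    rw [pi_algebraMap hconn hπ, if_neg hc.ne', (ℛ k h).convMul_apply, map_sum] at h2
    change _ = (0 : H)
    rw [← h2]
    rw [WithConv.ofConv_sum, LinearMap.sum_apply]
    have h3 : ∀ p : ℕ × ℕ, (toConv (π p.1 ∘ₗ HopfAlgebra.antipode k) * toConv (π p.2)).ofConv h
      = ∑ i ∈ (ℛ k h).index, π p.1 (HopfAlgebra.antipode k ((ℛ k h).left i)) *
          π p.2 ((ℛ k h).right i) := fun p => (ℛ k h).convMul_apply _ _
    simp only [h3]
    rw [Finset.sum_comm]
    refine Finset.sum_congr rfl fun i _ => ?_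
    exact (pi_mul hdec hπ hgmul c _ _).symm
  rw [← h0, ← Finset.Nat.sum_antidiagonal_swap, Finset.Nat.sum_antidiagonal_eq_sum_range_succ_mk]
  rfl

open Classical in
lemma expand (hdec : DirectSum.IsInternal ℋ)
    (hconn : ℋ 0 = LinearMap.range (Algebra.linearMap k H))
    (hπ : ∀ n m : ℕ, ∀ h ∈ ℋ m, π n h = if n = m then h else 0)
    (hgmul : ∀ i j : ℕ, ℋ i * ℋ j ≤ ℋ (i + j))
    (hgcomul : ∀ n : ℕ, ∀ h ∈ ℋ n, Coalgebra.comul (R := k) h ∈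
      ⨆ (p : ℕ × ℕ) (_ : p.1 + p.2 = n),
        LinearMap.range (TensorProduct.mapIncl (ℋ p.1) (ℋ p.2)))
    (γ : List ℕ) (hγ : IsComposition γ) :
    ∃ W : List ℕ →₀ k, xiS π γ = Finsupp.linearCombination k (xiC π) W ∧
      ∀ α, W α = if IsComposition α then antiT k α γ else 0 := by
  induction hn : γ.sum using Nat.strong_induction_on generalizing γ with
  | _ n ih =>
  cases γ with
  | nil =>
    refine ⟨Finsupp.single [] 1, by simp [xiS_nil, xiC_nil], fun α => ?_⟩
    induction α using List.reverseRecOn with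
    | nil => simp [antiT_nil, Mq, hγ]
    | append_singleton β a => simp [antiT_snoc, stepU_apply_nil]
  | cons c t =>
    have ht : IsComposition t := fun x hx => hγ x (by simp [hx])
    obtain ⟨d, rfl⟩ : ∃ d, c = d + 1 :=
      ⟨c - 1, by have := hγ c (by simp); omega⟩
    simp only [List.sum_cons] at hn
    obtain ⟨W0, hW0, hW0'⟩ := ih t.sum (by omega) t ht rfl
    have hex : ∀ i : ℕ, ∃ W : List ℕ →₀ k, i < d →
        (xiS π ((d - i) :: t) = Finsupp.linearCombination k (xiC π) W ∧
        ∀ α, W α = if IsComposition α then antiT k α ((d - i) :: t) else 0) := by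
      intro i
      by_cases hi : i < d
      · have hc : IsComposition ((d - i) :: t) := by
          intro x hx
          rcases List.mem_cons.1 hx with rfl | hx
          · omega
          · exact ht x hx
        obtain ⟨W, hW⟩ := ih ((d - i) :: t).sum (by simp; omega) _ hc rfl
        exact ⟨W, fun _ => hW⟩
      · exact ⟨0, fun h => absurd h hi⟩
    choose W hW using hex
    let sn : ℕ → (List ℕ →₀ k) →ₗ[k] (List ℕ →₀ k) :=
      fun a => Finsupp.lmapDomain k k (fun l => l ++ [a])
    have hsn : ∀ a V, Finsupp.linearCombination k (xiC π) (sn a V) =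
        Finsupp.linearCombination k (xiC π) V * toConv (π a) := by
      intro a V
      simp only [sn, Finsupp.lmapDomain_apply, Finsupp.linearCombination_mapDomain]
      simp only [Finsupp.linearCombination_apply, Finsupp.sum, Finset.sum_mul, Function.comp,
        xiC_snoc, smul_mul_assoc]
    have hsn0 : ∀ a V, sn a V [] = 0 := by
      intro a V
      refine Finsupp.mapDomain_of_notMem_range _ _ ?_
      simp
    have hsn1 : ∀ a b V β, sn a V (β ++ [b]) = if a = b then V β else 0 := by
      intro a b V β
      by_cases hab : a = b
      · subst hab
        rw [if_pos rfl]
        exact Finsupp.mapDomain_apply (List.append_left_injective [a]) V β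
      · rw [if_neg hab]
        refine Finsupp.mapDomain_of_notMem_range _ _ ?_
        rintro ⟨l, hl⟩
        simp at hl
        exact hab hl.2
    refine ⟨-(sn (d + 1) W0 + ∑ i ∈ Finset.range d, sn (i + 1) (W i)), ?_, ?_⟩
    · have h1 := takeuchi hdec hconn hπ hgmul (d + 1) (by omega)
      rw [Finset.sum_range_succ, Finset.sum_range_succ'] at h1
      have h2 : toConv (π 0 ∘ₗ HopfAlgebra.antipode k) = 1 := by
        have h3 := pi_zero hdec hconn hπ hgcomul
        have h4 : π 0 = (1 : WithConv (H →ₗ[k] H)).ofConv := by rw [← h3]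
        rw [h4]
        exact xiS_nil π
      rw [Nat.sub_self, h2, one_mul, pi_zero hdec hconn hπ hgcomul, mul_one, Nat.sub_zero] at h1
      rw [map_neg, map_add, map_sum, hsn, ← hW0, xiS_cons]
      have h5 : ∀ i ∈ Finset.range d, Finsupp.linearCombination k (xiC π) (sn (i + 1) (W i)) =
          xiS π t * (toConv (π (d + 1 - (i + 1)) ∘ₗ HopfAlgebra.antipode k) *
            toConv (π (i + 1))) := by
        intro i hi
        rw [hsn, ← (hW i (Finset.mem_range.1 hi)).1, xiS_cons, mul_assoc,
          Nat.add_sub_add_right]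
      rw [Finset.sum_congr rfl h5, ← Finset.mul_sum, ← mul_add, ← mul_neg]
      congr 1
      rw [eq_neg_iff_add_eq_zero, ← h1]
      abel
    · intro α
      induction α using List.reverseRecOn with
      | nil =>
        simp [hsn0, antiT_nil, Mq]
      | append_singleton β a =>
        rw [Finsupp.neg_apply, Finsupp.add_apply, Finsupp.finsetSum_apply, antiT_snoc,
          stepU_apply_cons, hsn1]
        simp only [hsn1]
        have hiff : IsComposition (β ++ [a]) ↔ IsComposition β ∧ 0 < a := by
          simp only [IsComposition, List.mem_append, List.mem_singleton]
          constructor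
          · intro h; exact ⟨fun x hx => h x (Or.inl hx), h a (Or.inr rfl)⟩
          · rintro ⟨h, h'⟩ x (hx | rfl)
            · exact h x hx
            · exact h'
        by_cases ha : 0 < a
        · obtain ⟨a, rfl⟩ : ∃ b, a = b + 1 := ⟨a - 1, by omega⟩
          simp only [Nat.add_right_cancel_iff, Finset.sum_ite_eq', Finset.mem_range]
          by_cases hβ : IsComposition β
          · rw [if_pos (hiff.2 ⟨hβ, ha⟩), hW0', if_pos hβ]
            have hz : antiT k β (0 :: t) = 0 := by
              by_contra hne
              exact absurd ((antiT_supp k β hβ _ hne).1 0 (by simp)) (lt_irrefl 0)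
            rcases lt_trichotomy a d with h | h | h
            · rw [if_pos h, (hW a h).2, if_pos hβ, if_neg (by omega), if_neg (by omega),
                if_pos (by omega), Nat.add_sub_add_right]
            · subst h
              simp [hz]
            · rw [if_neg (by omega), if_neg (by omega), if_neg (by omega), if_neg (by omega)]
          · rw [if_neg (fun h => hβ (hiff.1 h).1), hW0', if_neg hβ]
            by_cases h : a < d
            · rw [if_pos h, (hW a h).2, if_neg hβ]; simp
            · rw [if_neg h]; simp
        · have : a = 0 := by omega
          subst this
          rw [if_neg (fun h => ha (hiff.1 h).2)]
          simp

end Graded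

end HopfHelpers

/-- Let `H` be a commutative connected graded `k`-Hopf algebra (grading `ℋ`, graded projections
`π`), with Bernstein homomorphism `β_H : H → H ⊗ QSym`, `β_H(h) = ∑_α ξ_α(h) ⊗ M_α`, where
`ξ_α = m^{(m-1)} ∘ π_α ∘ Δ^{(m-1)}`.  Let `S_QSym = SQ` be the antipode of `QSym` (a linear map
satisfying the two antipode identities for the bialgebra `QSym`).  Then
`β_H ∘ S_H = (id_H ⊗ S_QSym) ∘ β_H`. -/
theorem bernstein_comm_antipode {k H : Type*} [CommRing k] [CommRing H]
    [HopfAlgebra k H]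
    (ℋ : ℕ → Submodule k H) (π : ℕ → H →ₗ[k] H)
    (hdec : DirectSum.IsInternal ℋ)
    (hconn : ℋ 0 = LinearMap.range (Algebra.linearMap k H))
    (hπ : ∀ n m : ℕ, ∀ h ∈ ℋ m, π n h = if n = m then h else 0)
    (hgmul : ∀ i j : ℕ, ℋ i * ℋ j ≤ ℋ (i + j))
    (hgcomul : ∀ n : ℕ, ∀ h ∈ ℋ n, Coalgebra.comul (R := k) h ∈
      ⨆ (p : ℕ × ℕ) (_ : p.1 + p.2 = n),
        LinearMap.range (TensorProduct.mapIncl (ℋ p.1) (ℋ p.2)))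
    (SQ : QSymM k →ₗ[k] QSymM k)
    (hSQ₁ : mulQ k ∘ₗ TensorProduct.map SQ LinearMap.id ∘ₗ comulQ k = unitQ k ∘ₗ counitQ k)
    (hSQ₂ : mulQ k ∘ₗ TensorProduct.map LinearMap.id SQ ∘ₗ comulQ k = unitQ k ∘ₗ counitQ k) :
    ∀ h : H,
      ∑ᶠ α ∈ {α : List ℕ | IsComposition α},
          xiA π α (HopfAlgebra.antipode (R := k) h) ⊗ₜ[k] Mq k α =
        ∑ᶠ α ∈ {α : List ℕ | IsComposition α}, xiA π α h ⊗ₜ[k] SQ (Mq k α) := by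
  classical
  intro h
  obtain ⟨N1, hN1⟩ := xiA_bounded hdec hconn hπ hgcomul h
  obtain ⟨N2, hN2⟩ := xiA_bounded hdec hconn hπ hgcomul (HopfAlgebra.antipode k h)
  let N := max N1 N2
  let F : Finset (List ℕ) := (comp_finite N).toFinset
  have hF : ∀ α, α ∈ F ↔ IsComposition α ∧ α.sum ≤ N := by
    intro α
    simp [F]
  have key : ∀ f : List ℕ → H ⊗[k] QSymM k, (∀ α, N < α.sum → f α = 0) →
      ∑ᶠ α ∈ {α : List ℕ | IsComposition α}, f α = ∑ α ∈ F, f α := by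
    intro f hf
    refine finsum_mem_eq_sum_of_inter_support_eq f ?_
    ext α
    simp only [Set.mem_inter_iff, Set.mem_ofPred_eq, Function.mem_support, Finset.mem_coe, hF]
    constructor
    · rintro ⟨h1, h2⟩
      exact ⟨⟨h1, by by_contra h3; exact h2 (hf α (by omega))⟩, h2⟩
    · rintro ⟨⟨h1, _⟩, h2⟩
      exact ⟨h1, h2⟩
  rw [key _ (fun α hα => by
      rw [hN2 α (lt_of_le_of_lt (le_max_right _ _) hα), TensorProduct.zero_tmul]),
    key _ (fun α hα => by
      rw [hN1 α (lt_of_le_of_lt (le_max_left _ _) hα), TensorProduct.zero_tmul])]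
  have hL : ∀ γ ∈ F, xiA π γ (HopfAlgebra.antipode k h) =
      ∑ α ∈ F, antiT k α γ • xiA π α h := by
    intro γ hγ
    rw [hF] at hγ
    obtain ⟨W, hW, hW'⟩ := expand hdec hconn hπ hgmul hgcomul γ hγ.1
    have h1 : xiS π γ h = xiA π γ (HopfAlgebra.antipode k h) := rfl
    have hsub : W.support ⊆ F := by
      intro α hα
      rw [Finsupp.mem_support_iff, hW'] at hα
      have hc : IsComposition α := by
        by_contra hc
        exact hα (if_neg hc)
      rw [if_pos hc] at hα
      have := (antiT_supp k α hc γ hα).2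
      exact (hF α).2 ⟨hc, by omega⟩
    rw [← h1, hW, Finsupp.linearCombination_apply,
      Finsupp.sum_of_support_subset _ hsub _ (by simp)]
    change (WithConv.ofConv (∑ α ∈ F, W α • xiC π α)) h = _
    rw [WithConv.ofConv_sum, LinearMap.sum_apply]
    refine Finset.sum_congr rfl fun α hα => ?_
    rw [hW', if_pos ((hF α).1 hα).1]
    rfl
  have hR : ∀ α ∈ F, SQ (Mq k α) = ∑ γ ∈ F, antiT k α γ • Mq k γ := by
    intro α hα
    rw [hF] at hα
    rw [SQ_eq_antiT k SQ hSQ₁]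
    have hsub : (antiT k α).support ⊆ F := by
      intro γ hγ
      rw [Finsupp.mem_support_iff] at hγ
      have := antiT_supp k α hα.1 γ hγ
      exact (hF γ).2 ⟨this.1, by omega⟩
    conv_lhs => rw [← Finsupp.sum_single (antiT k α)]
    rw [Finsupp.sum_of_support_subset _ hsub _ (by simp)]
    exact Finset.sum_congr rfl fun γ _ => by simp [Mq]
  have e1 : ∑ γ ∈ F, xiA π γ (HopfAlgebra.antipode k h) ⊗ₜ[k] Mq k γ =
      ∑ γ ∈ F, ∑ α ∈ F, (antiT k α γ • xiA π α h) ⊗ₜ[k] Mq k γ :=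
    Finset.sum_congr rfl fun γ hγ => by rw [hL γ hγ, TensorProduct.sum_tmul]
  have e2 : ∑ α ∈ F, xiA π α h ⊗ₜ[k] SQ (Mq k α) =
      ∑ α ∈ F, ∑ γ ∈ F, xiA π α h ⊗ₜ[k] (antiT k α γ • Mq k γ) :=
    Finset.sum_congr rfl fun α hα => by rw [hR α hα, TensorProduct.tmul_sum]
  rw [e1, e2, Finset.sum_comm]
  refine Finset.sum_congr rfl fun α _ => Finset.sum_congr rfl fun γ _ => ?_
  rw [TensorProduct.smul_tmul]
end
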